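/- arXiv:2508.00887 — 6 statements merged into one kernel-verified Lean document; each statement's English description precedes it below -/
import Mathlib

section
/- Let n ≥ 1, let X be a real n×n matrix with nonnegative entries and let θ > 0. Suppose D^∞ maximizes ⟨D, X⟩ over the set of n×n doubly stochastic matrices and D^θ maximizes Γ^θ_X(D) = ⟨D, X⟩ − (1/θ)⟨D, D⟩ over the set of n×n doubly stochastic matrices. Then the normalized assignment error ε^θ_X = (1/n)(⟨D^∞, X⟩ − ⟨D^θ, X⟩) satisfies ε^θ_X ≤ 1/θ. -/
open Finset

def IsDoublyStochastic {n : ℕ} (D : Matrix (Fin n) (Fin n) ℝ) : Prop :=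
  (∀ i j, 0 ≤ D i j) ∧ (∀ i, ∑ j, D i j = 1) ∧ (∀ j, ∑ i, D i j = 1)

noncomputable def finner {n : ℕ} (A B : Matrix (Fin n) (Fin n) ℝ) : ℝ :=
  ∑ i, ∑ j, A i j * B i j

noncomputable def fnorm {n : ℕ} (A : Matrix (Fin n) (Fin n) ℝ) : ℝ :=
  Real.sqrt (finner A A)

noncomputable def Gamma {n : ℕ} (θ : ℝ) (X D : Matrix (Fin n) (Fin n) ℝ) : ℝ :=
  finner D X - (1 / θ) * finner D D
/-- the normalized assignment error ε^θ_X = (1/n)(⟨D^∞, X⟩ − ⟨D^θ, X⟩)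
is at most 1/θ. -/
theorem stmt_1 (n : ℕ) (hn : 1 ≤ n) (X : Matrix (Fin n) (Fin n) ℝ)
    (hX : ∀ i j, 0 ≤ X i j) (θ : ℝ) (hθ : 0 < θ)
    (Dinf Dθ : Matrix (Fin n) (Fin n) ℝ)
    (hDinf : IsDoublyStochastic Dinf)
    (hDinfMax : ∀ E : Matrix (Fin n) (Fin n) ℝ, IsDoublyStochastic E →
      finner E X ≤ finner Dinf X)
    (hDθ : IsDoublyStochastic Dθ)
    (hDθMax : ∀ E : Matrix (Fin n) (Fin n) ℝ, IsDoublyStochastic E →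
      Gamma θ X E ≤ Gamma θ X Dθ) :
    (1 / (n : ℝ)) * (finner Dinf X - finner Dθ X) ≤ 1 / θ := by
  have hnpos : (0 : ℝ) < n := by exact_mod_cast hn
  have h1 := hDθMax Dinf hDinf
  unfold Gamma at h1
  have h2 : 0 ≤ finner Dθ Dθ :=
    Finset.sum_nonneg fun i _ => Finset.sum_nonneg fun j _ => mul_self_nonneg _
  have h3 : finner Dinf Dinf ≤ n := by
    obtain ⟨h0, hr, _⟩ := hDinf
    have hrow : ∀ i, ∑ j, Dinf i j * Dinf i j ≤ 1 := by
      intro i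
      rw [← hr i]
      refine Finset.sum_le_sum fun j _ => ?_
      have : Dinf i j ≤ 1 := by
        rw [← hr i]
        exact Finset.single_le_sum (fun k _ => h0 i k) (Finset.mem_univ j)
      exact mul_le_of_le_one_left (h0 i j) this
    calc finner Dinf Dinf ≤ ∑ _i : Fin n, (1 : ℝ) := Finset.sum_le_sum fun i _ => hrow i
      _ = n := by simp
  have hp : 0 < 1 / θ := by positivity
  have h4 := mul_le_mul_of_nonneg_left h3 hp.le
  have h5 := mul_nonneg hp.le h2
  rw [one_div_mul_eq_div, div_le_iff₀ hnpos]
  linarith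
end

section
/- Let n ≥ 1, let X be a real n×n matrix with nonnegative entries and let θ > 0. Suppose D^∞ maximizes ⟨D, X⟩ over the set of n×n doubly stochastic matrices and D^θ maximizes Γ^θ_X(D) = ⟨D, X⟩ − (1/θ)⟨D, D⟩ over the set of n×n doubly stochastic matrices. Then ⟨D^∞, X⟩ − ⟨D^θ, X⟩ ≤ (1/θ)(n − ⟨D^θ, D^θ⟩), and consequently ⟨D^∞, X⟩ − ⟨D^θ, X⟩ ≤ (n − 1)/θ. -/
open Finset

/-- ⟨D^∞, X⟩ − ⟨D^θ, X⟩ ≤ (1/θ)(n − ⟨D^θ, D^θ⟩), and consequently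
⟨D^∞, X⟩ − ⟨D^θ, X⟩ ≤ (n − 1)/θ. -/
theorem stmt_2 (n : ℕ) (hn : 1 ≤ n) (X : Matrix (Fin n) (Fin n) ℝ)
    (hX : ∀ i j, 0 ≤ X i j) (θ : ℝ) (hθ : 0 < θ)
    (Dinf Dθ : Matrix (Fin n) (Fin n) ℝ)
    (hDinf : IsDoublyStochastic Dinf)
    (hDinfMax : ∀ E : Matrix (Fin n) (Fin n) ℝ, IsDoublyStochastic E →
      finner E X ≤ finner Dinf X)
    (hDθ : IsDoublyStochastic Dθ)
    (hDθMax : ∀ E : Matrix (Fin n) (Fin n) ℝ, IsDoublyStochastic E →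
      Gamma θ X E ≤ Gamma θ X Dθ) :
    finner Dinf X - finner Dθ X ≤ (1 / θ) * ((n : ℝ) - finner Dθ Dθ) ∧
      finner Dinf X - finner Dθ X ≤ ((n : ℝ) - 1) / θ := by
  have hθ' : 0 < 1 / θ := by positivity
  have hnpos : (0 : ℝ) < n := by exact_mod_cast hn
  have h1 : finner Dinf Dinf ≤ n := by
    unfold finner
    have : ∀ i ∈ (Finset.univ : Finset (Fin n)), ∑ j, Dinf i j * Dinf i j ≤ 1 := by
      intro i _
      rw [← hDinf.2.1 i]
      apply Finset.sum_le_sum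
      intro j _
      have h0 := hDinf.1 i j
      have hle : Dinf i j ≤ 1 := by
        rw [← hDinf.2.1 i]
        exact Finset.single_le_sum (f := fun j => Dinf i j)
          (fun k _ => hDinf.1 i k) (Finset.mem_univ j)
      nlinarith
    calc _ ≤ ∑ i : Fin n, (1 : ℝ) := Finset.sum_le_sum this
      _ = n := by simp
  have h2 : 1 ≤ finner Dθ Dθ := by
    unfold finner
    have key : ∀ i ∈ (Finset.univ : Finset (Fin n)),
        1 / (n : ℝ) ≤ ∑ j, Dθ i j * Dθ i j := by
      intro i _
      have hs : ∑ j, (2 / (n : ℝ) * Dθ i j - 1 / (n : ℝ) ^ 2) ≤ ∑ j, Dθ i j * Dθ i j := by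
        apply Finset.sum_le_sum
        intro j _
        have := sq_nonneg (Dθ i j - 1 / (n : ℝ))
        have e : (Dθ i j - 1 / (n : ℝ)) ^ 2
          = Dθ i j * Dθ i j - (2 / (n : ℝ) * Dθ i j - 1 / (n : ℝ) ^ 2) := by ring
        linarith
      rw [Finset.sum_sub_distrib, ← Finset.mul_sum, hDθ.2.1 i] at hs
      simp only [Finset.sum_const, Finset.card_univ, Fintype.card_fin, nsmul_eq_mul] at hs
      have e : 2 / (n : ℝ) * 1 - n * (1 / (n : ℝ) ^ 2) = 1 / n := by
        field_simp
        ring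
      linarith
    calc (1 : ℝ) = ∑ i : Fin n, 1 / (n : ℝ) := by
          simp [hnpos.ne']
      _ ≤ _ := Finset.sum_le_sum key
  have h3 := hDθMax Dinf hDinf
  unfold Gamma at h3
  have h4 := mul_le_mul_of_nonneg_left h1 hθ'.le
  have h5 := mul_le_mul_of_nonneg_left h2 hθ'.le
  have e : ((n : ℝ) - 1) / θ = 1 / θ * n - 1 / θ * 1 := by ring
  rw [e, mul_sub]
  constructor <;> linarith
end

section
/- Let n ≥ 1 and let X be a real n×n matrix. Let 𝓕 denote the set of doubly stochastic matrices that maximize ⟨D, X⟩ over all n×n doubly stochastic matrices, and let D* be the unique element of 𝓕 minimizing ⟨D, D⟩ over 𝓕. For each θ > 0 let D^θ_X be the unique maximizer of Γ^θ_X(D) = ⟨D, X⟩ − (1/θ)⟨D, D⟩ over the n×n doubly stochastic matrices. Then D^θ_X converges to D* as θ → ∞ (entrywise, equivalently in Frobenius norm). -/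
open Finset

theorem ds_compact (n : ℕ) :
    IsCompact {D : Matrix (Fin n) (Fin n) ℝ | IsDoublyStochastic D} := by
  have h1 : IsCompact (Set.pi Set.univ (fun _ : Fin n => Set.pi Set.univ
      (fun _ : Fin n => Set.Icc (0:ℝ) 1))) :=
    isCompact_univ_pi (fun _ => isCompact_univ_pi (fun _ => isCompact_Icc))
  have hc : ∀ i j : Fin n, Continuous (fun D : Matrix (Fin n) (Fin n) ℝ => D i j) :=
    fun i j => continuous_id.matrix_elem i j
  refine IsCompact.of_isClosed_subset h1 ?_ ?_
  · simp only [IsDoublyStochastic, Set.setOf_and, Set.setOf_forall]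
    refine IsClosed.inter ?_ (IsClosed.inter ?_ ?_)
    · exact isClosed_iInter fun i => isClosed_iInter fun j =>
        isClosed_le continuous_const (hc i j)
    · exact isClosed_iInter fun i => isClosed_eq
        (continuous_finsetSum _ fun j _ => hc i j) continuous_const
    · exact isClosed_iInter fun j => isClosed_eq
        (continuous_finsetSum _ fun i _ => hc i j) continuous_const
  · rintro D ⟨h0, hr, -⟩ i - j -
    refine ⟨h0 i j, ?_⟩
    rw [← hr i]
    exact Finset.single_le_sum (f := fun j => D i j) (fun j _ => h0 i j) (Finset.mem_univ j)

theorem finner_self_nonneg' {n : ℕ} (D : Matrix (Fin n) (Fin n) ℝ) : 0 ≤ finner D D :=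
  Finset.sum_nonneg fun _ _ => Finset.sum_nonneg fun _ _ => mul_self_nonneg _

theorem cluster_mem {Y : Type*} [TopologicalSpace Y] {f : ℝ → Y} {y : Y} {s : Set Y}
    (hs : IsClosed s) (h : MapClusterPt y Filter.atTop f)
    (he : ∀ᶠ t in Filter.atTop, f t ∈ s) : y ∈ s := by
  by_contra hy
  obtain ⟨t, h1, h2⟩ := ((h.frequently (hs.isOpen_compl.mem_nhds hy)).and_eventually he).exists
  exact h1 h2

/-- as θ → ∞, the unique maximizer D^θ_X of Γ^θ_X over the doubly
stochastic matrices converges to D*, the unique minimizer of ⟨D, D⟩ over the set 𝓕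
of maximizers of ⟨D, X⟩ over the doubly stochastic matrices. -/
theorem stmt_3 (n : ℕ) (hn : 1 ≤ n) (X : Matrix (Fin n) (Fin n) ℝ)
    (F : Set (Matrix (Fin n) (Fin n) ℝ))
    (hF : F = {D | IsDoublyStochastic D ∧
      ∀ E : Matrix (Fin n) (Fin n) ℝ, IsDoublyStochastic E → finner E X ≤ finner D X})
    (Dstar : Matrix (Fin n) (Fin n) ℝ)
    (hDstarMem : Dstar ∈ F)
    (hDstarMin : ∀ E ∈ F, E ≠ Dstar → finner Dstar Dstar < finner E E)
    (Dθ : ℝ → Matrix (Fin n) (Fin n) ℝ)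
    (hDθ : ∀ θ : ℝ, 0 < θ → IsDoublyStochastic (Dθ θ) ∧
      ∀ E : Matrix (Fin n) (Fin n) ℝ, IsDoublyStochastic E → E ≠ Dθ θ →
        Gamma θ X E < Gamma θ X (Dθ θ)) :
    Filter.Tendsto Dθ Filter.atTop (nhds Dstar) := by
  subst hF
  obtain ⟨hS, hMax⟩ := hDstarMem
  have hc : ∀ i j : Fin n, Continuous (fun D : Matrix (Fin n) (Fin n) ℝ => D i j) :=
    fun i j => continuous_id.matrix_elem i j
  have hcX : Continuous (fun D : Matrix (Fin n) (Fin n) ℝ => finner D X) :=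
    continuous_finsetSum _ fun i _ => continuous_finsetSum _ fun j _ =>
      (hc i j).mul continuous_const
  have hcD : Continuous (fun D : Matrix (Fin n) (Fin n) ℝ => finner D D) :=
    continuous_finsetSum _ fun i _ => continuous_finsetSum _ fun j _ =>
      (hc i j).mul (hc i j)
  have hG : ∀ θ : ℝ, 0 < θ → Gamma θ X Dstar ≤ Gamma θ X (Dθ θ) := by
    intro θ hθ
    by_cases h : Dstar = Dθ θ
    · rw [← h]
    · exact ((hDθ θ hθ).2 _ hS h).le
  have hpos : ∀ᶠ θ : ℝ in Filter.atTop, 0 < θ := Filter.eventually_gt_atTop 0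
  refine (ds_compact n).tendsto_nhds_of_unique_mapClusterPt
    (hpos.mono fun θ hθ => (hDθ θ hθ).1) ?_
  intro Y hY hcl
  have hYY : finner Y Y ≤ finner Dstar Dstar := by
    refine cluster_mem (s := {D | finner D D ≤ finner Dstar Dstar})
      (isClosed_le hcD continuous_const) hcl (hpos.mono fun θ hθ => ?_)
    have h1 := hG θ hθ
    have h2 := hMax _ (hDθ θ hθ).1
    unfold Gamma at h1
    have h3 : 0 < 1 / θ := by positivity
    exact le_of_mul_le_mul_left (by linarith) h3
  have hYX : finner Dstar X ≤ finner Y X := by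
    refine le_of_forall_pos_le_add fun ε hε => ?_
    have hlim : Filter.Tendsto (fun θ : ℝ => (1 / θ) * finner Dstar Dstar)
        Filter.atTop (nhds 0) := by
      simpa using (tendsto_inv_atTop_zero (𝕜 := ℝ)).mul_const (finner Dstar Dstar)
    refine cluster_mem (s := {D | finner Dstar X ≤ finner D X + ε})
      (isClosed_le continuous_const (hcX.add continuous_const)) hcl ?_
    filter_upwards [hpos, hlim.eventually (gt_mem_nhds hε)] with θ hθ hlt
    have h1 := hG θ hθ
    unfold Gamma at h1
    have h3 : 0 ≤ (1 / θ) * finner (Dθ θ) (Dθ θ) :=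
      mul_nonneg (by positivity) (finner_self_nonneg' _)
    show finner Dstar X ≤ finner (Dθ θ) X + ε
    linarith
  by_contra hne
  exact absurd (hDstarMin Y ⟨hY, fun E hE => (hMax E hE).trans hYX⟩ hne) (not_lt.mpr hYY)
end

section
/- Let n ≥ 1 and let X be a real n×n matrix such that the maximizer of ⟨D, X⟩ over the n×n doubly stochastic matrices is unique and is a permutation matrix P. For each θ > 0 let D^θ_X be the unique maximizer of Γ^θ_X(D) = ⟨D, X⟩ − (1/θ)⟨D, D⟩ over the n×n doubly stochastic matrices. Then D^θ_X converges to P as θ → ∞. -/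
open Finset

def IsPermutationMatrix {n : ℕ} (P : Matrix (Fin n) (Fin n) ℝ) : Prop :=
  IsDoublyStochastic P ∧ ∀ i j, P i j = 0 ∨ P i j = 1

/-- if the maximizer of ⟨D, X⟩ over the doubly stochastic matrices is
unique and is a permutation matrix P, then D^θ_X → P as θ → ∞. -/
theorem stmt_4 (n : ℕ) (hn : 1 ≤ n) (X : Matrix (Fin n) (Fin n) ℝ)
    (P : Matrix (Fin n) (Fin n) ℝ)
    (hP : IsPermutationMatrix P)
    (hPMax : ∀ E : Matrix (Fin n) (Fin n) ℝ, IsDoublyStochastic E → finner E X ≤ finner P X)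
    (hPUnique : ∀ D : Matrix (Fin n) (Fin n) ℝ, IsDoublyStochastic D →
      (∀ E : Matrix (Fin n) (Fin n) ℝ, IsDoublyStochastic E → finner E X ≤ finner D X) →
      D = P)
    (Dθ : ℝ → Matrix (Fin n) (Fin n) ℝ)
    (hDθ : ∀ θ : ℝ, 0 < θ → IsDoublyStochastic (Dθ θ) ∧
      ∀ E : Matrix (Fin n) (Fin n) ℝ, IsDoublyStochastic E → E ≠ Dθ θ →
        Gamma θ X E < Gamma θ X (Dθ θ)) :
    Filter.Tendsto Dθ Filter.atTop (nhds P) := by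
  have hc : Continuous (fun D : Matrix (Fin n) (Fin n) ℝ => finner D X) := by
    unfold finner
    fun_prop
  have hcpt : IsCompact {D : Matrix (Fin n) (Fin n) ℝ | IsDoublyStochastic D} := by
    have hbox : IsCompact (Set.univ.pi fun _ : Fin n => Set.univ.pi fun _ : Fin n =>
        Set.Icc (0 : ℝ) 1) :=
      isCompact_univ_pi fun _ => isCompact_univ_pi fun _ => isCompact_Icc
    refine IsCompact.of_isClosed_subset hbox ?_ ?_
    · unfold IsDoublyStochastic
      simp only [Set.setOf_and, Set.setOf_forall]
      refine IsClosed.inter ?_ (IsClosed.inter ?_ ?_)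
      · exact isClosed_iInter fun i => isClosed_iInter fun j =>
          isClosed_le continuous_const (by fun_prop)
      · exact isClosed_iInter fun i => isClosed_eq (by fun_prop) continuous_const
      · exact isClosed_iInter fun i => isClosed_eq (by fun_prop) continuous_const
    · rintro D ⟨h0, h1, -⟩ i - j -
      refine ⟨h0 i j, ?_⟩
      rw [← h1 i]
      exact Finset.single_le_sum (f := fun j => D i j) (fun k _ => h0 i k) (Finset.mem_univ j)
  have hlim : Filter.Tendsto (fun θ => finner (Dθ θ) X) Filter.atTop (nhds (finner P X)) := by
    have hlow : Filter.Tendsto (fun θ : ℝ => finner P X - (1 / θ) * finner P P)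
        Filter.atTop (nhds (finner P X)) := by
      have h : Filter.Tendsto (fun θ : ℝ => 1 / θ) Filter.atTop (nhds 0) := by
        simpa using tendsto_inv_atTop_zero (𝕜 := ℝ)
      simpa using tendsto_const_nhds.sub (h.mul_const (finner P P))
    refine tendsto_of_tendsto_of_tendsto_of_le_of_le' hlow tendsto_const_nhds ?_ ?_
    · filter_upwards [Filter.eventually_gt_atTop 0] with θ hθ
      have h1 : Gamma θ X P ≤ Gamma θ X (Dθ θ) := by
        by_cases h : P = Dθ θ
        · rw [← h]
        · exact ((hDθ θ hθ).2 P hP.1 h).le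
      have h2 : 0 ≤ finner (Dθ θ) (Dθ θ) :=
        Finset.sum_nonneg fun i _ => Finset.sum_nonneg fun j _ => mul_self_nonneg _
      have h3 : 0 ≤ (1 / θ) * finner (Dθ θ) (Dθ θ) := by positivity
      unfold Gamma at h1
      linarith
    · filter_upwards [Filter.eventually_gt_atTop 0] with θ hθ
      exact hPMax _ (hDθ θ hθ).1
  refine hcpt.tendsto_nhds_of_unique_mapClusterPt ?_ ?_
  · filter_upwards [Filter.eventually_gt_atTop 0] with θ hθ
    exact (hDθ θ hθ).1
  · intro D hD hcl
    have h := hcl.continuousAt_comp (f := fun D => finner D X) hc.continuousAt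
    have he : finner D X = finner P X := by
      have h' : ClusterPt (finner D X) (nhds (finner P X)) := ClusterPt.mono h hlim
      exact eq_of_nhds_neBot h'
    exact hPUnique D hD fun E hE => he ▸ hPMax E hE
end

section
/- Let n ≥ 1 and let X be a real n×n matrix. For each θ > 0 let D^θ_X be the unique maximizer of Γ^θ_X(D) = ⟨D, X⟩ − (1/θ)⟨D, D⟩ over the n×n doubly stochastic matrices. Then as θ → 0⁺, D^θ_X converges to the matrix (1/n)·𝟙𝟙ᵀ, i.e., the n×n matrix all of whose entries equal 1/n. -/
open Finset

/-- as θ → 0⁺, the unique maximizer D^θ_X of Γ^θ_X over the doubly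
stochastic matrices converges to the matrix (1/n)·𝟙𝟙ᵀ, all of whose entries are 1/n. -/
theorem stmt_5 (n : ℕ) (hn : 1 ≤ n) (X : Matrix (Fin n) (Fin n) ℝ)
    (Dθ : ℝ → Matrix (Fin n) (Fin n) ℝ)
    (hDθ : ∀ θ : ℝ, 0 < θ → IsDoublyStochastic (Dθ θ) ∧
      ∀ E : Matrix (Fin n) (Fin n) ℝ, IsDoublyStochastic E → E ≠ Dθ θ →
        Gamma θ X E < Gamma θ X (Dθ θ)) :
    Filter.Tendsto Dθ (nhdsWithin 0 (Set.Ioi 0))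
      (nhds (Matrix.of fun _ _ => (1 : ℝ) / n)) := by
  have hn0 : (n : ℝ) ≠ 0 := by positivity
  set J : Matrix (Fin n) (Fin n) ℝ := Matrix.of fun _ _ => (1 : ℝ) / n with hJ
  have hJe : ∀ i j, J i j = 1 / n := fun _ _ => rfl
  have hJds : IsDoublyStochastic J := by
    refine ⟨fun i j => by rw [hJe]; positivity, fun i => ?_, fun j => ?_⟩ <;>
      simp [hJe, hn0]
  set C : ℝ := (∑ i, ∑ j, |X i j|) - finner J X with hC
  have key : ∀ θ : ℝ, 0 < θ → ∀ i j, (Dθ θ i j - 1 / n) ^ 2 ≤ θ * C := by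
    intro θ hθ i j
    obtain ⟨⟨h0, hr, hc⟩, hmax⟩ := hDθ θ hθ
    have hle : Gamma θ X J ≤ Gamma θ X (Dθ θ) := by
      by_cases h : J = Dθ θ
      · rw [← h]
      · exact (hmax J hJds h).le
    have hJJ : finner J J = 1 := by
      simp only [finner, hJe]
      simp
      field_simp
    have hX : finner (Dθ θ) X ≤ ∑ i, ∑ j, |X i j| := by
      unfold finner
      refine Finset.sum_le_sum fun a _ => Finset.sum_le_sum fun b _ => ?_
      have h1 : Dθ θ a b ≤ 1 := by
        rw [← hr a]
        exact Finset.single_le_sum (f := fun j => Dθ θ a j) (fun k _ => h0 a k) (Finset.mem_univ b)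
      calc Dθ θ a b * X a b ≤ Dθ θ a b * |X a b| :=
            mul_le_mul_of_nonneg_left (le_abs_self _) (h0 a b)
        _ ≤ 1 * |X a b| := mul_le_mul_of_nonneg_right h1 (abs_nonneg _)
        _ = _ := one_mul _
    have hsq : ∑ a, ∑ b, (Dθ θ a b - 1 / n) ^ 2 = finner (Dθ θ) (Dθ θ) - 1 := by
      have : ∀ a b, (Dθ θ a b - 1 / n) ^ 2 =
          Dθ θ a b * Dθ θ a b - 2 / n * Dθ θ a b + 1 / n * (1 / n) := by
        intro a b; ring
      simp only [this, Finset.sum_add_distrib, Finset.sum_sub_distrib, ← Finset.mul_sum, hr, finner]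
      simp
      field_simp
      ring
    have hs : (Dθ θ i j - 1 / n) ^ 2 ≤ ∑ a, ∑ b, (Dθ θ a b - 1 / n) ^ 2 :=
      (Finset.single_le_sum (f := fun b => (Dθ θ i b - 1 / n) ^ 2)
        (fun _ _ => sq_nonneg _) (Finset.mem_univ j)).trans
      (Finset.single_le_sum (f := fun a => ∑ b, (Dθ θ a b - 1 / n) ^ 2)
        (fun _ _ => Finset.sum_nonneg fun _ _ => sq_nonneg _) (Finset.mem_univ i))
    unfold Gamma at hle
    rw [hJJ] at hle
    have h2 : (1 / θ) * (finner (Dθ θ) (Dθ θ) - 1) ≤ C := by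
      rw [hC]; linarith
    have h3 := mul_le_mul_of_nonneg_left h2 hθ.le
    have h4 : θ * ((1 / θ) * (finner (Dθ θ) (Dθ θ) - 1)) = finner (Dθ θ) (Dθ θ) - 1 := by
      field_simp
    linarith
  refine tendsto_pi_nhds.2 fun i => tendsto_pi_nhds.2 fun j => ?_
  rw [tendsto_iff_dist_tendsto_zero]
  have hlim : Filter.Tendsto (fun θ : ℝ => Real.sqrt (θ * C)) (nhdsWithin 0 (Set.Ioi 0)) (nhds 0) := by
    have : Filter.Tendsto (fun θ : ℝ => Real.sqrt (θ * C)) (nhds 0) (nhds (Real.sqrt (0 * C))) :=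
      Continuous.tendsto (by fun_prop) 0
    rw [zero_mul, Real.sqrt_zero] at this
    exact this.mono_left nhdsWithin_le_nhds
  refine squeeze_zero' (Filter.Eventually.of_forall fun _ => dist_nonneg) ?_ hlim
  filter_upwards [self_mem_nhdsWithin] with θ hθ
  rw [Real.dist_eq, hJe]
  exact Real.abs_le_sqrt (key θ hθ i j)
end

section
/- Let n ≥ 1 and let X be a real n×n matrix (not necessarily symmetric). Then the unique minimizer of ‖X − Y‖_F over the affine set {Y ∈ ℝ^{n×n} : Y𝟙 = 𝟙 and Yᵀ𝟙 = 𝟙} is Y* = X + ((1/n)I + ((𝟙ᵀX𝟙)/n²)I − (1/n)X)𝟙𝟙ᵀ − (1/n)𝟙𝟙ᵀX, where I is the n×n identity matrix. -/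
open Finset

noncomputable def onesMatrix (n : ℕ) : Matrix (Fin n) (Fin n) ℝ :=
  Matrix.of (fun _ _ => (1 : ℝ))

/-- 𝒫₁(X) = X + ((1/n)I + ((𝟙ᵀX𝟙)/n²)I − (1/n)X)𝟙𝟙ᵀ − (1/n)𝟙𝟙ᵀX -/
noncomputable def P1 {n : ℕ} (X : Matrix (Fin n) (Fin n) ℝ) : Matrix (Fin n) (Fin n) ℝ :=
  X + ((1 / (n : ℝ)) • (1 : Matrix (Fin n) (Fin n) ℝ)
        + ((∑ i, ∑ j, X i j) / (n : ℝ) ^ 2) • (1 : Matrix (Fin n) (Fin n) ℝ)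
        - (1 / (n : ℝ)) • X) * onesMatrix n
    - (1 / (n : ℝ)) • (onesMatrix n * X)

/-- 𝒫₃(X) = X + (((𝟙ᵀX𝟙)/n²)I − (1/n)X)𝟙𝟙ᵀ − (1/n)𝟙𝟙ᵀX -/
noncomputable def P3 {n : ℕ} (X : Matrix (Fin n) (Fin n) ℝ) : Matrix (Fin n) (Fin n) ℝ :=
  X + (((∑ i, ∑ j, X i j) / (n : ℝ) ^ 2) • (1 : Matrix (Fin n) (Fin n) ℝ)
        - (1 / (n : ℝ)) • X) * onesMatrix n
    - (1 / (n : ℝ)) • (onesMatrix n * X)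

theorem P1_apply {n : ℕ} (X : Matrix (Fin n) (Fin n) ℝ) (i j : Fin n) :
    P1 X i j = X i j + (1 / (n : ℝ) + (∑ i, ∑ j, X i j) / (n : ℝ) ^ 2
      - (1 / (n : ℝ)) * ∑ k, X i k) - (1 / (n : ℝ)) * ∑ k, X k j := by
  have h1 : (X * onesMatrix n) i j = ∑ k, X i k := by
    simp [Matrix.mul_apply, onesMatrix]
  have h2 : (onesMatrix n * X) i j = ∑ k, X k j := by
    simp [Matrix.mul_apply, onesMatrix]
  have h3 : onesMatrix n i j = 1 := rfl
  unfold P1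
  rw [Matrix.sub_mul, Matrix.add_mul]
  simp only [Matrix.smul_mul, Matrix.one_mul, Matrix.add_apply, Matrix.sub_apply,
    Matrix.smul_apply, h1, h2, h3, smul_eq_mul, mul_one]

/-- Y* = 𝒫₁(X) is the unique minimizer of ‖X − Y‖_F over the affine set
of matrices whose row sums and column sums all equal 1. -/
theorem stmt_8 (n : ℕ) (hn : 1 ≤ n) (X : Matrix (Fin n) (Fin n) ℝ) :
    (∀ i, ∑ j, P1 X i j = 1) ∧ (∀ j, ∑ i, P1 X i j = 1) ∧
      ∀ Y : Matrix (Fin n) (Fin n) ℝ,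
        ((∀ i, ∑ j, Y i j = 1) ∧ (∀ j, ∑ i, Y i j = 1)) → Y ≠ P1 X →
          fnorm (X - P1 X) < fnorm (X - Y) := by
  have hn0 : (n : ℝ) ≠ 0 := by
    have : n ≠ 0 := by omega
    exact_mod_cast this
  have hrow : ∀ i, ∑ j, P1 X i j = 1 := by
    intro i
    simp only [P1_apply, Finset.sum_add_distrib, Finset.sum_sub_distrib, ← Finset.mul_sum,
      Finset.sum_const, Finset.card_univ, Fintype.card_fin, nsmul_eq_mul]
    rw [Finset.sum_comm (f := fun j k => X k j)]
    field_simp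
    ring
  have hcol : ∀ j, ∑ i, P1 X i j = 1 := by
    intro j
    simp only [P1_apply, Finset.sum_add_distrib, Finset.sum_sub_distrib, ← Finset.mul_sum,
      Finset.sum_const, Finset.card_univ, Fintype.card_fin, nsmul_eq_mul]
    field_simp
    ring
  refine ⟨hrow, hcol, ?_⟩
  rintro Y ⟨hYr, hYc⟩ hne
  obtain ⟨a, b, hab⟩ : ∃ a b : Fin n → ℝ, ∀ i j, X i j - P1 X i j = a i + b j :=
    ⟨fun i => -(1 / (n : ℝ) + (∑ i, ∑ j, X i j) / (n : ℝ) ^ 2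
      - (1 / (n : ℝ)) * ∑ k, X i k), fun j => (1 / (n : ℝ)) * ∑ k, X k j, by
      intro i j
      rw [P1_apply]
      ring⟩
  have hc1 : ∑ i, ∑ j, a i * (P1 X i j - Y i j) = 0 := by
    simp only [← Finset.mul_sum, Finset.sum_sub_distrib, hrow, hYr]
    simp
  have hc2 : ∑ i, ∑ j, b j * (P1 X i j - Y i j) = 0 := by
    rw [Finset.sum_comm]
    simp only [← Finset.mul_sum, Finset.sum_sub_distrib, hcol, hYc]
    simp
  have hkey : finner (X - Y) (X - Y) = finner (X - P1 X) (X - P1 X)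
      + ∑ i, ∑ j, (P1 X i j - Y i j) ^ 2 := by
    have : finner (X - Y) (X - Y) = finner (X - P1 X) (X - P1 X)
      + ∑ i, ∑ j, (P1 X i j - Y i j) ^ 2 + 2 * ∑ i, ∑ j, a i * (P1 X i j - Y i j)
      + 2 * ∑ i, ∑ j, b j * (P1 X i j - Y i j) := by
      simp only [finner, Finset.mul_sum, ← Finset.sum_add_distrib, Matrix.sub_apply]
      refine Finset.sum_congr rfl fun i _ => Finset.sum_congr rfl fun j _ => ?_
      linear_combination (2 * (P1 X i j - Y i j)) * hab i j
    rw [this, hc1, hc2]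
    ring
  have hpos : 0 < ∑ i, ∑ j, (P1 X i j - Y i j) ^ 2 := by
    obtain ⟨i, j, hij⟩ : ∃ i j, Y i j ≠ P1 X i j := by
      by_contra h
      push Not at h
      exact hne (Matrix.ext h)
    have h0 : 0 < (P1 X i j - Y i j) ^ 2 := by
      have := sub_ne_zero.mpr hij.symm
      positivity
    refine Finset.sum_pos' (fun _ _ => Finset.sum_nonneg fun _ _ => sq_nonneg _)
      ⟨i, Finset.mem_univ _, ?_⟩
    exact Finset.sum_pos' (fun _ _ => sq_nonneg _) ⟨j, Finset.mem_univ _, h0⟩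
  unfold fnorm
  refine Real.sqrt_lt_sqrt ?_ (by linarith)
  exact Finset.sum_nonneg fun _ _ => Finset.sum_nonneg fun _ _ => mul_self_nonneg _
end
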